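/- Let α > -1, 0 < t ≤ 2, b ≠ 0, and n ≥ 2. Define S_n(x) = L_n^α(x) + b·L_{n-1}^{α+t}(x). If y and y' are consecutive zeros of L_{n-1}^{α+t}, then S_n(y)·S_n(y') < 0; hence the zeros of S_n interlace with the zeros of L_{n-1}^{α+t}. -/

import Mathlib

open Finset

/-- Generalized Laguerre polynomial `L_n^α(x) = ∑_{k=0}^n (-1)^k C(n+α, n-k) x^k / k!`,
where `C(n+α, n-k) = (∏_{i=1}^{n-k} (α+k+i)) / (n-k)!`. -/
noncomputable def laguerre (α : ℝ) (n : ℕ) (x : ℝ) : ℝ :=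
  ∑ k ∈ Finset.range (n + 1),
    (-1 : ℝ) ^ k * (∏ i ∈ Finset.range (n - k), (α + k + 1 + i)) /
      ((Nat.factorial (n - k) : ℝ) * (Nat.factorial k : ℝ)) * x ^ k

/-!
Since `(L_n^β)' = L_n^β - L_n^{β+1}`, every Wronskian of two Laguerre polynomials is a two-by-two
determinant of values at parameters differing by one. On `(0, ∞)` the Wronskian of `L_n^β` and
`L_n^γ` is positive for `β < γ ≤ β + 1`, by induction on `n`. As
`L_{n-1}^{α+t} = L_n^{α+t} - L_n^{α+t-1}`, this gives a positive Wronskian for `L_n^α` and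
`L_{n-1}^{α+t}` when `t ≤ 1`. For `t = 2` the Wronskian satisfies a telescoping recurrence in `n`,
and a Plücker relation interpolates between `t = 1` and `t = 2`. Adding `b L_{n-1}^{α+t}` to
`L_n^α` does not change the Wronskian, so Sturm's separation argument applies to `S_n`.
-/

section Sturm

variable {p q p' q' : ℝ → ℝ} {a b : ℝ}

theorem mem_Ioo_of_eq_zero_of_wronskian_ne_zero {u : ℝ}
    (hW : q u * p' u - q' u * p u ≠ 0) (ha : p a = 0) (hb : p b = 0) (hu : u ∈ Set.Icc a b)
    (hqu : q u = 0) : u ∈ Set.Ioo a b := by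
  rcases Set.eq_endpoints_or_mem_Ioo_of_mem_Icc hu with rfl | rfl | hu'
  · exact absurd (by simp [hqu, ha]) hW
  · exact absurd (by simp [hqu, hb]) hW
  · exact hu'

theorem exists_mem_Ioo_eq_zero_of_wronskian_ne_zero (hab : a < b)
    (hp : ∀ u ∈ Set.Icc a b, HasDerivAt p (p' u) u)
    (hq : ∀ u ∈ Set.Icc a b, HasDerivAt q (q' u) u)
    (hW : ∀ u ∈ Set.Icc a b, q u * p' u - q' u * p u ≠ 0) (ha : p a = 0) (hb : p b = 0) :
    ∃ z ∈ Set.Ioo a b, q z = 0 := by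
  by_contra! hne
  have hq0 : ∀ u ∈ Set.Icc a b, q u ≠ 0 := fun u hu hqu =>
    hne u (mem_Ioo_of_eq_zero_of_wronskian_ne_zero (hW u hu) ha hb hu hqu) hqu
  have hquot : ∀ u ∈ Set.Icc a b,
      HasDerivAt (p / q) ((p' u * q u - p u * q' u) / q u ^ 2) u :=
    fun u hu => (hp u hu).div (hq u hu) (hq0 u hu)
  obtain ⟨c, hc, hzero⟩ := exists_hasDerivAt_eq_zero hab
    (fun u hu => (hquot u hu).continuousAt.continuousWithinAt) (by simp [ha, hb])
    (fun u hu => hquot u (Set.Ioo_subset_Icc_self hu))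
  have hc' := Set.Ioo_subset_Icc_self hc
  have hnum := (div_eq_zero_iff.1 hzero).resolve_right (pow_ne_zero 2 (hq0 c hc'))
  exact hW c hc' (by linear_combination hnum)

theorem exists_mem_uIcc_eq_zero_of_mul_nonpos (hq : ContinuousOn q (Set.uIcc a b))
    (h : q a * q b ≤ 0) : ∃ z ∈ Set.uIcc a b, q z = 0 :=
  intermediate_value_uIcc hq (Set.mem_uIcc.2 ((mul_nonpos_iff.1 h).symm.imp_right And.symm))

theorem mul_neg_of_unique_simple_zero {z d : ℝ} (hz : z ∈ Set.Ioo a b)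
    (hq : ContinuousOn q (Set.Icc a b)) (hd : HasDerivAt q d z) (hd0 : d ≠ 0) (hqz : q z = 0)
    (huniq : ∀ u ∈ Set.Icc a b, q u = 0 → u = z) : q a * q b < 0 := by
  have ha : a ∈ Set.Icc a b := Set.left_mem_Icc.2 (hz.1.trans hz.2).le
  have hb : b ∈ Set.Icc a b := Set.right_mem_Icc.2 (hz.1.trans hz.2).le
  by_contra! hab
  have hqa : q a ≠ 0 := fun h => hz.1.ne (huniq a ha h)
  have hqb : q b ≠ 0 := fun h => hz.2.ne' (huniq b hb h)
  have hzero : ∀ u ∈ Set.Icc a b, ∀ v ∈ Set.Icc a b, q u * q v ≤ 0 → z ∈ Set.uIcc u v := by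
    intro u hu v hv huv
    have hsub := Set.uIcc_subset_Icc hu hv
    obtain ⟨w, hw, hqw⟩ := exists_mem_uIcc_eq_zero_of_mul_nonpos (hq.mono hsub) huv
    exact huniq w (hsub hw) hqw ▸ hw
  have hnonneg : ∀ u ∈ Set.Icc a b, 0 ≤ q a * q u := by
    intro u hu
    by_contra! hneg
    have hneg' : q u * q b < 0 := by
      have : (q a * q u) * (q a * q b) < 0 :=
        mul_neg_of_neg_of_pos hneg (hab.lt_of_ne' (mul_ne_zero hqa hqb))
      nlinarith [sq_nonneg (q a)]
    have hzu := hzero a ha u hu hneg.le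
    have huz := hzero u hu b hb hneg'.le
    rw [Set.uIcc_of_le hu.1] at hzu
    rw [Set.uIcc_of_le hu.2] at huz
    rw [← le_antisymm hzu.2 huz.1, hqz, mul_zero] at hneg
    exact hneg.false
  have hmin : IsLocalMin (fun u => q a * q u) z := by
    filter_upwards [Icc_mem_nhds hz.1 hz.2] with u hu
    simpa only [hqz, mul_zero] using hnonneg u hu
  exact mul_ne_zero hqa hd0 (hmin.hasDerivAt_eq_zero (hd.const_mul (q a)))

theorem sign_change_of_wronskian_ne_zero (hab : a < b)
    (hp : ∀ u ∈ Set.Icc a b, HasDerivAt p (p' u) u)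
    (hq : ∀ u ∈ Set.Icc a b, HasDerivAt q (q' u) u)
    (hW : ∀ u ∈ Set.Icc a b, q u * p' u - q' u * p u ≠ 0) (ha : p a = 0) (hb : p b = 0)
    (hne : ∀ u ∈ Set.Ioo a b, p u ≠ 0) :
    q a * q b < 0 ∧ ∃! z, z ∈ Set.Ioo a b ∧ q z = 0 := by
  obtain ⟨z, hz, hqz⟩ := exists_mem_Ioo_eq_zero_of_wronskian_ne_zero hab hp hq hW ha hb
  -- By the symmetry of the separation argument, two zeros of `q` would enclose one of `p`.
  have hseparated : ∀ u ∈ Set.Ioo a b, ∀ v ∈ Set.Ioo a b, q u = 0 → q v = 0 → ¬u < v := by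
    intro u hu v hv hqu hqv huv
    have hsub : Set.Icc u v ⊆ Set.Icc a b := Set.Icc_subset_Icc hu.1.le hv.2.le
    obtain ⟨w, hw, hpw⟩ := exists_mem_Ioo_eq_zero_of_wronskian_ne_zero huv
      (fun s hs => hq s (hsub hs)) (fun s hs => hp s (hsub hs))
      (fun s hs h => hW s (hsub hs) (by linear_combination -h)) hqu hqv
    exact hne w ⟨hu.1.trans hw.1, hw.2.trans hv.2⟩ hpw
  have huniq : ∀ u ∈ Set.Ioo a b, q u = 0 → u = z := fun u hu hqu =>
    le_antisymm (not_lt.1 (hseparated z hz u hu hqz hqu)) (not_lt.1 (hseparated u hu z hz hqu hqz))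
  have hz' := Set.Ioo_subset_Icc_self hz
  refine ⟨mul_neg_of_unique_simple_zero hz
    (fun u hu => (hq u hu).continuousAt.continuousWithinAt) (hq z hz')
    (fun h => hW z hz' (by simp [hqz, h])) hqz
    (fun u hu hqu => huniq u (mem_Ioo_of_eq_zero_of_wronskian_ne_zero (hW u hu) ha hb hu hqu) hqu),
    z, ⟨hz, hqz⟩, fun u hu => huniq u hu.1 hu.2⟩

end Sturm

section Contiguous

/-- The coefficient of `x ^ k` in `L_{k+j}^β`. Indexing by `(k, j)` rather than by `(k + j, k)`
keeps truncated subtraction out of the coefficient identities. -/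
noncomputable def laguerreCoeff (β : ℝ) (k j : ℕ) : ℝ :=
  (-1) ^ k * (∏ i ∈ range j, (β + k + 1 + i)) / (j.factorial * k.factorial)

theorem laguerre_eq_sum_antidiagonal (β : ℝ) (n : ℕ) (x : ℝ) :
    laguerre β n x = ∑ kj ∈ antidiagonal n, laguerreCoeff β kj.1 kj.2 * x ^ kj.1 :=
  (Nat.sum_antidiagonal_eq_sum_range_succ (fun k j => laguerreCoeff β k j * x ^ k) n).symm

theorem succ_mul_laguerreCoeff_succ_right (β : ℝ) (k j : ℕ) :
    (j + 1) * laguerreCoeff β k (j + 1) = (k + j + 1 + β) * laguerreCoeff β k j := by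
  simp only [laguerreCoeff, prod_range_succ, Nat.factorial_succ]
  push_cast
  field_simp
  ring

theorem succ_mul_laguerreCoeff_succ_left (β : ℝ) (k j : ℕ) :
    (k + 1) * laguerreCoeff β (k + 1) j = -laguerreCoeff (β + 1) k j := by
  have hprod : ∏ i ∈ range j, (β + (k + 1 : ℕ) + 1 + i) = ∏ i ∈ range j, (β + 1 + k + 1 + i) :=
    prod_congr rfl fun i _ => by push_cast; ring
  simp only [laguerreCoeff, hprod, Nat.factorial_succ]
  push_cast
  field_simp
  ring

theorem laguerreCoeff_add_one_succ_right (β : ℝ) (k j : ℕ) :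
    laguerreCoeff (β + 1) k (j + 1) = laguerreCoeff β k (j + 1) + laguerreCoeff (β + 1) k j := by
  have hprod : ∏ i ∈ range j, (β + k + 1 + (i + 1 : ℕ)) = ∏ i ∈ range j, (β + 1 + k + 1 + i) :=
    prod_congr rfl fun i _ => by push_cast; ring
  rw [laguerreCoeff, laguerreCoeff, laguerreCoeff, prod_range_succ, prod_range_succ' _ j, hprod,
    Nat.factorial_succ]
  push_cast
  field_simp
  ring

theorem laguerre_zero (β x : ℝ) : laguerre β 0 x = 1 := by
  simp [laguerre]

theorem laguerre_add_one_succ (β : ℝ) (n : ℕ) (x : ℝ) :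
    laguerre (β + 1) (n + 1) x = laguerre β (n + 1) x + laguerre (β + 1) n x := by
  simp only [laguerre_eq_sum_antidiagonal, Nat.sum_antidiagonal_succ', add_assoc,
    ← sum_add_distrib, laguerreCoeff_add_one_succ_right, add_mul]
  simp [laguerreCoeff]

theorem sum_antidiagonal_fst_mul_laguerreCoeff (β : ℝ) (n : ℕ) (f : ℕ → ℝ) :
    ∑ kj ∈ antidiagonal (n + 1), laguerreCoeff β kj.1 kj.2 * (kj.1 * f kj.1) =
      -∑ kj ∈ antidiagonal n, laguerreCoeff (β + 1) kj.1 kj.2 * f (kj.1 + 1) := by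
  rw [Nat.sum_antidiagonal_succ, ← sum_neg_distrib, Nat.cast_zero, zero_mul, mul_zero, zero_add]
  refine sum_congr rfl fun kj _ => ?_
  push_cast
  linear_combination f (kj.1 + 1) * succ_mul_laguerreCoeff_succ_left β kj.1 kj.2

theorem succ_mul_laguerre_succ (β : ℝ) (n : ℕ) (x : ℝ) :
    (n + 1) * laguerre β (n + 1) x =
      (n + 1 + β) * laguerre β n x - x * laguerre (β + 1) n x := by
  have hfst : ∑ kj ∈ antidiagonal (n + 1), laguerreCoeff β kj.1 kj.2 * (kj.1 * x ^ kj.1) =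
      -(x * laguerre (β + 1) n x) := by
    rw [sum_antidiagonal_fst_mul_laguerreCoeff β n (x ^ ·), laguerre_eq_sum_antidiagonal, mul_sum]
    exact congrArg _ (sum_congr rfl fun kj _ => by ring)
  have hsnd : ∑ kj ∈ antidiagonal (n + 1), laguerreCoeff β kj.1 kj.2 * (kj.2 * x ^ kj.1) =
      (n + 1 + β) * laguerre β n x := by
    rw [Nat.sum_antidiagonal_succ', laguerre_eq_sum_antidiagonal, mul_sum, Nat.cast_zero,
      zero_mul, mul_zero, zero_add]
    refine sum_congr rfl fun kj hkj => ?_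
    rw [← mem_antidiagonal.1 hkj]
    push_cast
    linear_combination x ^ kj.1 * succ_mul_laguerreCoeff_succ_right β kj.1 kj.2
  calc (n + 1) * laguerre β (n + 1) x
      = ∑ kj ∈ antidiagonal (n + 1), (laguerreCoeff β kj.1 kj.2 * (kj.1 * x ^ kj.1) +
          laguerreCoeff β kj.1 kj.2 * (kj.2 * x ^ kj.1)) := by
        rw [laguerre_eq_sum_antidiagonal, mul_sum]
        refine sum_congr rfl fun kj hkj => ?_
        have hn : ((kj.1 : ℝ) + kj.2) = n + 1 := mod_cast mem_antidiagonal.1 hkj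
        rw [← hn]
        ring
    _ = (n + 1 + β) * laguerre β n x - x * laguerre (β + 1) n x := by
        rw [sum_add_distrib, hfst, hsnd]
        ring

theorem mul_laguerre_eq_sub (β : ℝ) (n : ℕ) (x : ℝ) :
    (n + 1 + β) * laguerre β n x =
      (β + 1 + x) * laguerre (β + 1) n x - x * laguerre (β + 1 + 1) n x := by
  cases n with
  | zero => simp only [laguerre_zero]; push_cast; ring
  | succ m =>
    have h1 := laguerre_add_one_succ β m x
    have h2 := laguerre_add_one_succ (β + 1) m x
    have h3 := succ_mul_laguerre_succ (β + 1) m x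
    push_cast
    linear_combination -(m + 2 + β) * h1 + x * h2 + h3

theorem hasDerivAt_laguerre (β : ℝ) (n : ℕ) (x : ℝ) :
    HasDerivAt (laguerre β n) (laguerre β n x - laguerre (β + 1) n x) x := by
  have hsum : HasDerivAt (laguerre β n)
      (∑ kj ∈ antidiagonal n, laguerreCoeff β kj.1 kj.2 * (kj.1 * x ^ (kj.1 - 1))) x := by
    rw [funext (laguerre_eq_sum_antidiagonal β n)]
    exact HasDerivAt.fun_sum fun kj _ => (hasDerivAt_pow kj.1 x).const_mul _
  convert hsum using 1
  cases n with
  | zero => simp [laguerre_zero]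
  | succ n =>
    rw [sum_antidiagonal_fst_mul_laguerreCoeff β n (fun k => x ^ (k - 1)), laguerre_add_one_succ,
      laguerre_eq_sum_antidiagonal (β + 1) n]
    simp

end Contiguous

section Positivity

variable {x : ℝ}

theorem laguerre_pos_of_nonpos {β : ℝ} (hβ : -1 < β) (hx : x ≤ 0) (n : ℕ) :
    0 < laguerre β n x := by
  induction n generalizing β with
  | zero => rw [laguerre_zero]; exact one_pos
  | succ n ih =>
    have hcoef : (0 : ℝ) < n + 1 + β := by linarith [n.cast_nonneg (α := ℝ)]
    have hfirst := mul_pos hcoef (ih hβ)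
    have hsecond := mul_nonpos_of_nonpos_of_nonneg hx (ih (β := β + 1) (by linarith)).le
    refine pos_of_mul_pos_right (a := (n : ℝ) + 1) ?_ (by positivity)
    rw [succ_mul_laguerre_succ]
    linarith

theorem laguerre_pos_and_add_one_le_two_mul {β : ℝ} (hx : 0 ≤ x) (n : ℕ)
    (hβ : 2 * x + n ≤ β) : 0 < laguerre β n x ∧ laguerre (β + 1) n x ≤ 2 * laguerre β n x := by
  induction n with
  | zero => simp only [laguerre_zero]; norm_num
  | succ n ih =>
    push_cast at hβ
    obtain ⟨hpos, hle⟩ := ih (by linarith)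
    have hsucc := succ_mul_laguerre_succ β n x
    have hstep := laguerre_add_one_succ β n x
    have hn : (0 : ℝ) < n + 1 := by positivity
    have hgrow : 2 * laguerre β n x ≤ laguerre β (n + 1) x := by
      refine le_of_mul_le_mul_left ?_ hn
      nlinarith [mul_le_mul_of_nonneg_left hle hx]
    constructor <;> linarith

theorem eventually_laguerre_pos (hx : 0 ≤ x) (n : ℕ) :
    ∀ᶠ β in Filter.atTop, 0 < laguerre β n x :=
  Filter.eventually_atTop.2
    ⟨2 * x + n, fun _ hβ => (laguerre_pos_and_add_one_le_two_mul hx n hβ).1⟩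

end Positivity

section Wronskian

theorem mul_neg_of_mul_neg_of_mul_le {R : Type*} [CommRing R] [LinearOrder R]
    [IsStrictOrderedRing R] {a b c d : R} (hab : a * b < 0) (hbc : b * c < 0)
    (h : a * d ≤ c * b) : c * d < 0 := by
  have had : a * d < 0 := h.trans_lt (mul_comm b c ▸ hbc)
  by_contra! hcd
  nlinarith [mul_pos_of_neg_of_neg had hbc, mul_nonneg (neg_nonneg.2 hab.le) hcd]

theorem mul_nonneg_or_mul_nonneg_of_eventually_pos {u : ℝ → ℝ} {c β γ : ℝ}
    (hu : ∀ β γ, c < β → β ≤ γ → γ ≤ β + 1 → u β * u (γ + 1) ≤ u (β + 1) * u γ)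
    (hpos : ∀ᶠ δ in Filter.atTop, 0 < u δ) (hβ : c < β) (hβγ : β ≤ γ) (hγ : γ ≤ β + 1) :
    0 ≤ u γ * u (β + 1) ∨ 0 ≤ u (β + 1) * u (γ + 1) := by
  -- Otherwise `u` alternates in sign forever along `γ, β + 1, γ + 1, β + 2, …`.
  by_contra! hneg
  have halternate : ∀ k : ℕ,
      u (γ + k) * u (β + k + 1) < 0 ∧ u (β + k + 1) * u (γ + k + 1) < 0 := by
    intro k
    induction k with
    | zero => simpa using hneg
    | succ k ih =>
      have hleft := mul_neg_of_mul_neg_of_mul_le ih.1 ih.2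
        (hu (γ + k) (β + k + 1) (by linarith [k.cast_nonneg (α := ℝ)]) (by linarith) (by linarith))
      have hright := mul_neg_of_mul_neg_of_mul_le ih.2 hleft
        (hu (β + k + 1) (γ + k + 1) (by linarith [k.cast_nonneg (α := ℝ)]) (by linarith)
          (by linarith))
      push_cast
      simpa only [← add_assoc] using ⟨hleft, hright⟩
  obtain ⟨B, hB⟩ := Filter.eventually_atTop.1 hpos
  obtain ⟨k, hk⟩ := exists_nat_ge (B - β)
  exact (halternate k).1.not_gt (mul_pos (hB _ (by linarith)) (hB _ (by linarith)))

/-- The Wronskian `L_m^β (L_n^γ)' - (L_m^β)' L_n^γ`, with the derivatives eliminated by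
`(L_n^β)' = L_n^β - L_n^{β+1}`. -/
noncomputable def laguerreWronskian (m : ℕ) (β : ℝ) (n : ℕ) (γ x : ℝ) : ℝ :=
  laguerre (β + 1) m x * laguerre γ n x - laguerre β m x * laguerre (γ + 1) n x

theorem laguerreWronskian_swap (m : ℕ) (β : ℝ) (n : ℕ) (γ x : ℝ) :
    laguerreWronskian m β n γ x = -laguerreWronskian n γ m β x := by
  unfold laguerreWronskian; ring

theorem laguerreWronskian_self (n : ℕ) (β x : ℝ) : laguerreWronskian n β n β x = 0 := by
  unfold laguerreWronskian; ring

theorem laguerreWronskian_add_one_right (m : ℕ) (α : ℝ) (n : ℕ) (γ x : ℝ) :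
    laguerreWronskian m α n (γ + 1) x =
      laguerreWronskian m α (n + 1) (γ + 1) x - laguerreWronskian m α (n + 1) γ x := by
  simp only [laguerreWronskian]
  linear_combination laguerre α m x * laguerre_add_one_succ (γ + 1) n x -
    laguerre (α + 1) m x * laguerre_add_one_succ γ n x

theorem laguerreWronskian_plucker (m n k l : ℕ) (α β γ δ x : ℝ) :
    laguerreWronskian n β l δ x * laguerreWronskian m α k γ x =
      laguerreWronskian k γ l δ x * laguerreWronskian m α n β x +
        laguerreWronskian n β k γ x * laguerreWronskian m α l δ x := by
  unfold laguerreWronskian; ring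

theorem succ_mul_laguerreWronskian_succ (n : ℕ) (β γ x : ℝ) :
    (n + 1) * laguerreWronskian (n + 1) β (n + 1) γ x =
      (n + 1 + β) * laguerreWronskian n β n γ x +
        (γ - β) * (laguerre γ n x * laguerre (β + 1) n x) := by
  simp only [laguerreWronskian, laguerre_add_one_succ]
  linear_combination laguerre (β + 1) n x * succ_mul_laguerre_succ γ n x -
    laguerre (γ + 1) n x * succ_mul_laguerre_succ β n x

theorem succ_mul_laguerreWronskian_succ' (n : ℕ) (β γ x : ℝ) :
    (n + 1) * laguerreWronskian (n + 1) β (n + 1) γ x =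
      x * laguerreWronskian n (β + 1) n (γ + 1) x +
        (γ - β) * (laguerre (β + 1) n x * laguerre (γ + 1) n x) := by
  rw [succ_mul_laguerreWronskian_succ]
  simp only [laguerreWronskian]
  linear_combination laguerre (β + 1) n x * mul_laguerre_eq_sub γ n x -
    laguerre (γ + 1) n x * mul_laguerre_eq_sub β n x

variable {x : ℝ}

theorem laguerreWronskian_pos_of_lt {β γ : ℝ} (hx : 0 < x) (n : ℕ) (hβ : -2 < β) (hβγ : β < γ)
    (hγ : γ ≤ β + 1) : 0 < laguerreWronskian (n + 1) β (n + 1) γ x := by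
  induction n generalizing β γ with
  | zero =>
    have h := succ_mul_laguerreWronskian_succ 0 β γ x
    simp only [laguerreWronskian, laguerre_zero] at h ⊢
    push_cast at h
    linarith
  | succ n ih =>
    have hn : (0 : ℝ) < (n + 1 : ℕ) + 1 := by positivity
    refine pos_of_mul_pos_right ?_ hn.le
    have hlog : ∀ β γ : ℝ, -2 < β → β ≤ γ → γ ≤ β + 1 →
        laguerre β (n + 1) x * laguerre (γ + 1) (n + 1) x ≤
          laguerre (β + 1) (n + 1) x * laguerre γ (n + 1) x := by
      intro β γ hβ hβγ hγ
      rcases hβγ.eq_or_lt with rfl | hβγ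
      · exact (mul_comm _ _).le
      · exact (sub_pos.1 (ih hβ hβγ hγ)).le
    rcases mul_nonneg_or_mul_nonneg_of_eventually_pos hlog (eventually_laguerre_pos hx.le (n + 1))
      hβ hβγ.le hγ with h | h
    · rw [succ_mul_laguerreWronskian_succ]
      have hcoef : (0 : ℝ) < (n + 1 : ℕ) + 1 + β := by
        push_cast; linarith [n.cast_nonneg (α := ℝ)]
      exact add_pos_of_pos_of_nonneg (mul_pos hcoef (ih hβ hβγ hγ))
        (mul_nonneg (sub_nonneg.2 hβγ.le) h)
    · rw [succ_mul_laguerreWronskian_succ']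
      exact add_pos_of_pos_of_nonneg
        (mul_pos hx (ih (by linarith) (by linarith) (by linarith)))
        (mul_nonneg (sub_nonneg.2 hβγ.le) h)

theorem laguerreWronskian_pos_of_le_one {α t : ℝ} (hx : 0 < x) (n : ℕ) (hα : -1 < α + t)
    (ht0 : 0 < t) (ht1 : t ≤ 1) : 0 < laguerreWronskian (n + 1) α n (α + t) x := by
  have hup : 0 < laguerreWronskian (n + 1) α (n + 1) (α + t) x :=
    laguerreWronskian_pos_of_lt hx n (by linarith) (by linarith) (by linarith)
  have hdown : 0 ≤ laguerreWronskian (n + 1) (α + t - 1) (n + 1) α x := by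
    rcases ht1.eq_or_lt with rfl | ht1
    · rw [add_sub_cancel_right, laguerreWronskian_self]
    · exact (laguerreWronskian_pos_of_lt hx n (by linarith) (by linarith) (by linarith)).le
  have hsplit := laguerreWronskian_add_one_right (n + 1) α n (α + t - 1) x
  rw [sub_add_cancel] at hsplit
  rw [hsplit, laguerreWronskian_swap (n + 1) α (n + 1) (α + t - 1), sub_neg_eq_add]
  exact add_pos_of_pos_of_nonneg hup hdown

theorem add_two_mul_laguerreWronskian_add_two (α : ℝ) (n : ℕ) (x : ℝ) :
    (n + 2) * laguerreWronskian (n + 2) α (n + 1) (α + 1 + 1) x =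
      (n + 2 + α) * laguerreWronskian (n + 1) α n (α + 1 + 1) x +
        (laguerre (α + 1 + 1) (n + 1) x ^ 2 - laguerre (α + 1 + 1) n x ^ 2) := by
  have r0 := succ_mul_laguerre_succ α (n + 1) x
  have r1 := succ_mul_laguerre_succ (α + 1) (n + 1) x
  have r2 := succ_mul_laguerre_succ (α + 1) n x
  have s0 := laguerre_add_one_succ α n x
  have s1 := laguerre_add_one_succ (α + 1) n x
  have s2 := laguerre_add_one_succ (α + 1 + 1) n x
  have t1 := mul_laguerre_eq_sub (α + 1) n x
  simp only [laguerreWronskian]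
  push_cast at r0 r1
  set v : ℝ → ℝ := fun β => laguerre β n x
  set w : ℝ → ℝ := fun β => laguerre β (n + 1) x
  linear_combination w (α + 1 + 1) * r1 - w (α + 1 + 1 + 1) * r0 +
    (n + 2 + α) * w (α + 1 + 1) * s0 +
    ((n + 2 + α) * v (α + 1) - (1 + x) * (v (α + 1 + 1) + w (α + 1 + 1))) * s1 +
    (x * w (α + 1) - (n + 2 + α) * w α) * s2 + w (α + 1) * t1 - v (α + 1 + 1) * r2

theorem laguerreWronskian_add_two_pos {α : ℝ} (hα : -1 < α) (n : ℕ) (x : ℝ) :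
    0 < laguerreWronskian (n + 1) α n (α + 1 + 1) x ∧
      laguerre (α + 1 + 1) n x ^ 2 ≤ (n + 1) * laguerreWronskian (n + 1) α n (α + 1 + 1) x := by
  induction n with
  | zero => simp [laguerreWronskian, laguerre_add_one_succ, laguerre_zero]
  | succ n ih =>
    obtain ⟨hpos, hsq⟩ := ih
    have hrec := add_two_mul_laguerreWronskian_add_two α n x
    have hdrop := mul_pos (neg_lt_iff_pos_add.1 hα) hpos
    have hbound : laguerre (α + 1 + 1) (n + 1) x ^ 2 <
        (n + 2) * laguerreWronskian (n + 2) α (n + 1) (α + 1 + 1) x := by linarith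
    refine ⟨pos_of_mul_pos_right ((sq_nonneg _).trans_lt hbound) (by positivity), ?_⟩
    push_cast
    linarith

theorem laguerreWronskian_pos {α t : ℝ} (hα : -1 < α) (ht0 : 0 < t) (ht2 : t ≤ 2) (hx : 0 < x)
    (n : ℕ) : 0 < laguerreWronskian (n + 2) α (n + 1) (α + t) x := by
  rcases le_or_gt t 1 with ht1 | ht1
  · exact laguerreWronskian_pos_of_le_one hx (n + 1) (by linarith) ht0 ht1
  have hone : 0 < laguerreWronskian (n + 2) α (n + 1) (α + 1) x :=
    laguerreWronskian_pos_of_le_one hx (n + 1) (by linarith) one_pos le_rfl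
  have htwo := (laguerreWronskian_add_two_pos hα (n + 1) x).1
  rcases ht2.eq_or_lt with rfl | ht2
  · rwa [show α + 2 = α + 1 + 1 by ring]
  have hinner : ∀ β γ : ℝ, α < β → β < γ → γ ≤ β + 1 →
      0 < laguerreWronskian (n + 1) β (n + 1) γ x := fun _ _ hβ =>
    laguerreWronskian_pos_of_lt hx n (by linarith)
  refine pos_of_mul_pos_right ?_
    (hinner (α + 1) (α + 1 + 1) (by linarith) (by linarith) le_rfl).le
  rw [laguerreWronskian_plucker]
  exact add_pos
    (mul_pos (hinner (α + t) (α + 1 + 1) (by linarith) (by linarith) (by linarith)) hone)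
    (mul_pos (hinner (α + 1) (α + t) (by linarith) (by linarith) (by linarith)) htwo)

end Wronskian

theorem S_sign_change_at_zeros_of_shifted (α t b : ℝ) (hα : α > -1) (ht0 : 0 < t)
    (ht2 : t ≤ 2) (hb : b ≠ 0) (n : ℕ) (hn : 2 ≤ n)
    (S : ℝ → ℝ) (hS : ∀ x, S x = laguerre α n x + b * laguerre (α + t) (n - 1) x)
    (y y' : ℝ) (hlt : y < y') (hy : laguerre (α + t) (n - 1) y = 0)
    (hy' : laguerre (α + t) (n - 1) y' = 0)
    (hcons : ∀ u ∈ Set.Ioo y y', laguerre (α + t) (n - 1) u ≠ 0) :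
    S y * S y' < 0 ∧ ∃! z, z ∈ Set.Ioo y y' ∧ S z = 0 := by
  obtain ⟨m, rfl⟩ := Nat.exists_eq_add_of_le' hn
  have hy0 : 0 < y := by
    by_contra! h
    exact (laguerre_pos_of_nonpos (by linarith) h (m + 1)).ne' hy
  obtain rfl : S = fun x => laguerre α (m + 2) x + b * laguerre (α + t) (m + 1) x := funext hS
  have hp := hasDerivAt_laguerre (α + t) (m + 1)
  have hS' : ∀ u, HasDerivAt (fun x => laguerre α (m + 2) x + b * laguerre (α + t) (m + 1) x) _ u :=
    fun u => (hasDerivAt_laguerre α (m + 2) u).fun_add ((hp u).const_mul b)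
  refine sign_change_of_wronskian_ne_zero hlt (fun u _ => hp u) (fun u _ => hS' u)
    (fun u hu => ?_) hy hy' hcons
  have hW := laguerreWronskian_pos hα ht0 ht2 (hy0.trans_le hu.1) m
  convert hW.ne' using 1
  rw [laguerreWronskian]
  ring
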